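/- For every n ≥ 2, the first homology group H_1(K_n; ℤ) is isomorphic to ℤ^{2n−2}; equivalently, the abelianization of K_n is a free abelian group of rank 2n−2. -/

import Mathlib

open FreeGroup

/-- The free group on `n` generators. -/
abbrev FG (n : ℕ) : Type := FreeGroup (Fin n)

/-- The pure symmetric automorphism group `PΣ_n`: automorphisms sending each
generator to a conjugate of itself. -/
def PSigmaAut (n : ℕ) : Subgroup (MulAut (FG n)) where
  carrier := {φ | ∀ i : Fin n, ∃ w : FG n, φ (of i) = w * of i * w⁻¹}
  one_mem' := fun i => ⟨1, by simp⟩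
  mul_mem' := by
    rintro φ ψ hφ hψ i
    obtain ⟨w, hw⟩ := hψ i
    obtain ⟨v, hv⟩ := hφ i
    refine ⟨φ w * v, ?_⟩
    simp only [MulAut.mul_apply, hw, _root_.map_mul, _root_.map_inv, hv, mul_inv_rev, mul_assoc]
  inv_mem' := by
    intro φ hφ i
    obtain ⟨w, hw⟩ := hφ i
    refine ⟨(φ⁻¹ w)⁻¹, ?_⟩
    refine φ.injective ?_
    simp only [MulAut.apply_inv_self, _root_.map_mul, _root_.map_inv, inv_inv, hw]
    group

/-- The projection `F_n → F_{n-1}` sending `x_n ↦ 1` and `x_i ↦ x_i` for `i < n-1`. -/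
def projHom (n : ℕ) : FG n →* FG (n - 1) :=
  FreeGroup.lift fun i => if h : (i : ℕ) < n - 1 then of (⟨i, h⟩ : Fin (n - 1)) else 1

/-- The inclusion `F_{n-1} → F_n`. -/
def castHom (n : ℕ) : FG (n - 1) →* FG n :=
  FreeGroup.lift fun i => of (Fin.castLE (Nat.sub_le n 1) i)

/-- The endomorphism of `F_{n-1}` induced by an automorphism of `F_n`. -/
def desc (n : ℕ) (φ : MulAut (FG n)) : FG (n - 1) →* FG (n - 1) :=
  (projHom n).comp ((φ : FG n ≃* FG n).toMonoidHom.comp (castHom n))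

lemma desc_proj {n : ℕ} {φ : MulAut (FG n)} (hφ : φ ∈ PSigmaAut n) (x : FG n) :
    desc n φ (projHom n x) = projHom n (φ x) := by
  have : (desc n φ).comp (projHom n) = (projHom n).comp (φ : FG n ≃* FG n).toMonoidHom := by
    apply FreeGroup.ext_hom
    intro i
    by_cases h : (i : ℕ) < n - 1
    · simp only [MonoidHom.comp_apply, projHom, FreeGroup.lift_apply_of, dif_pos h]
      simp only [desc, MonoidHom.comp_apply, castHom, FreeGroup.lift_apply_of]
      congr 2
    · obtain ⟨w, hw⟩ := hφ i
      simp only [MonoidHom.comp_apply, projHom, FreeGroup.lift_apply_of, dif_neg h,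
        MulEquiv.coe_toMonoidHom, hw, _root_.map_mul, _root_.map_inv, _root_.map_one]
      simp
  exact DFunLike.congr_fun this x

lemma desc_mul {n : ℕ} {φ : MulAut (FG n)} (hφ : φ ∈ PSigmaAut n) (ψ : MulAut (FG n)) :
    desc n (φ * ψ) = (desc n φ).comp (desc n ψ) := by
  apply FreeGroup.ext_hom
  intro i
  simp only [desc, MonoidHom.comp_apply, MulEquiv.coe_toMonoidHom, MulAut.mul_apply]
  exact (desc_proj hφ _).symm

lemma desc_one (n : ℕ) : desc n 1 = MonoidHom.id (FG (n - 1)) := by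
  apply FreeGroup.ext_hom
  intro i
  simp only [desc, MonoidHom.comp_apply, MulEquiv.coe_toMonoidHom, MulAut.one_apply,
    castHom, FreeGroup.lift_apply_of, projHom, MonoidHom.id_apply]
  rw [dif_pos (show ((Fin.castLE (Nat.sub_le n 1) i : Fin n) : ℕ) < n - 1 from i.isLt)]
  exact congrArg of (Fin.ext rfl)

/-- The automorphism of `F_{n-1}` induced by an element of `PΣ_n`. -/
def descAut (n : ℕ) (φ : PSigmaAut n) : MulAut (FG (n - 1)) :=
  MonoidHom.toMulEquiv (desc n ↑φ) (desc n ↑(φ⁻¹))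
    (by
      rw [← desc_mul (φ⁻¹).2 ↑φ]
      norm_num [desc_one])
    (by
      rw [← desc_mul φ.2 ↑(φ⁻¹)]
      norm_num [desc_one])

lemma descAut_mem (n : ℕ) (φ : PSigmaAut n) : descAut n φ ∈ PSigmaAut (n - 1) := by
  intro i
  obtain ⟨w, hw⟩ := φ.2 (Fin.castLE (Nat.sub_le n 1) i)
  refine ⟨projHom n w, ?_⟩
  have : descAut n φ (of i) = projHom n ((φ : MulAut (FG n)) (of (Fin.castLE (Nat.sub_le n 1) i))) := by
    simp only [descAut, MonoidHom.toMulEquiv, MulEquiv.coe_mk, Equiv.coe_fn_mk, desc,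
      MonoidHom.comp_apply, MulEquiv.coe_toMonoidHom, castHom, FreeGroup.lift_apply_of]
  rw [this, hw]
  simp only [_root_.map_mul, _root_.map_inv, projHom, FreeGroup.lift_apply_of]
  rw [dif_pos (show ((Fin.castLE (Nat.sub_le n 1) i : Fin n) : ℕ) < n - 1 from i.isLt)]
  congr 2

/-- The homomorphism `π_n : PΣ_n → PΣ_{n-1}` induced by killing the last generator. -/
def piHom (n : ℕ) : PSigmaAut n →* PSigmaAut (n - 1) :=
  MonoidHom.mk' (fun φ => ⟨descAut n φ, descAut_mem n φ⟩)
    (by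
      intro φ ψ
      refine Subtype.ext (MulEquiv.ext fun x => ?_)
      show desc n ↑(φ * ψ) x = (descAut n φ * descAut n ψ) x
      rw [MulAut.mul_apply]
      show _ = desc n ↑φ (desc n ↑ψ x)
      rw [Subgroup.coe_mul, desc_mul φ.2]
      rfl)

/-- The kernel `K_n` of `π_n : PΣ_n → PΣ_{n-1}`. -/
def Kn (n : ℕ) : Subgroup (PSigmaAut n) := (piHom n).ker

/-- The monoid hom underlying `α_{ij}`: sends `x_i ↦ x_j x_i x_j⁻¹` and fixes the
other generators. -/
def alphaHom (n : ℕ) (i j : Fin n) : FG n →* FG n :=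
  FreeGroup.lift fun r => if r = i then of j * of i * (of j)⁻¹ else of r

/-- The inverse of `alphaHom`. -/
def alphaInvHom (n : ℕ) (i j : Fin n) : FG n →* FG n :=
  FreeGroup.lift fun r => if r = i then (of j)⁻¹ * of i * of j else of r

/-- The McCool generator `α_{ij} ∈ Aut(F_n)`, sending `x_i ↦ x_j x_i x_j⁻¹` and fixing
the other generators (defined to be the identity if `i = j`). -/
def alphaAut (n : ℕ) (i j : Fin n) : MulAut (FG n) :=
  if h : i = j then 1 else
    MonoidHom.toMulEquiv (alphaHom n i j) (alphaInvHom n i j)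
      (by
        apply FreeGroup.ext_hom
        intro r
        by_cases hr : r = i
        · subst hr
          simp [alphaHom, alphaInvHom, Ne.symm h, mul_assoc]
        · simp [alphaHom, alphaInvHom, hr])
      (by
        apply FreeGroup.ext_hom
        intro r
        by_cases hr : r = i
        · subst hr
          simp [alphaHom, alphaInvHom, Ne.symm h, mul_assoc]
        · simp [alphaHom, alphaInvHom, hr])

lemma alphaAut_apply_of (n : ℕ) {i j : Fin n} (hij : i ≠ j) (r : Fin n) :
    alphaAut n i j (of r) = if r = i then of j * of i * (of j)⁻¹ else of r := by
  simp only [alphaAut, dif_neg hij]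
  show alphaHom n i j (of r) = _
  simp [alphaHom]

lemma alphaAut_mem (n : ℕ) (i j : Fin n) : alphaAut n i j ∈ PSigmaAut n := by
  by_cases h : i = j
  · simp only [alphaAut, dif_pos h]
    exact (PSigmaAut n).one_mem
  · intro r
    rw [alphaAut_apply_of n h r]
    by_cases hr : r = i
    · subst hr
      exact ⟨of j, by simp⟩
    · exact ⟨1, by simp [hr]⟩

/-- `α_{ij}` as an element of `PΣ_n`. -/
def alphaP (n : ℕ) (i j : Fin n) : PSigmaAut n := ⟨alphaAut n i j, alphaAut_mem n i j⟩

section PartOne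

lemma aux_toWord_cons {α : Type*} [DecidableEq α] (a : α × Bool) (g : FreeGroup α)
    (h : FreeGroup.IsReduced (a :: g.toWord)) :
    (FreeGroup.mk [a] * g).toWord = a :: g.toWord := by
  have h2 : FreeGroup.mk [a] * g = FreeGroup.mk (a :: g.toWord) := by
    conv_lhs => rw [← FreeGroup.mk_toWord (x := g)]
    rw [FreeGroup.mul_mk]
    rfl
  rw [h2, FreeGroup.toWord_mk, h.reduce_eq]

lemma aux_toWord_cons' {α : Type*} [DecidableEq α] (a : α × Bool) (P : List (α × Bool))
    (g : FreeGroup α) (hP : P ≠ []) (hr : FreeGroup.IsReduced (a :: P)) (hg : P <+: g.toWord) :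
    (FreeGroup.mk [a] * g).toWord = a :: g.toWord := by
  apply aux_toWord_cons
  obtain ⟨t, ht⟩ := hg
  have h3 : FreeGroup.IsReduced (P ++ t) := by rw [ht]; exact FreeGroup.isReduced_toWord
  have := FreeGroup.IsReduced.append_overlap (L₁ := [a]) (by simpa using hr) h3 hP
  rw [← ht]
  simpa using this

lemma aux_ping {α : Type*} [DecidableEq α] (i : α) (e : Bool) (W : List (α × Bool)) :
    ∀ g : FreeGroup α,
    FreeGroup.IsReduced (W ++ [(i, e)]) → FreeGroup.IsReduced (W ++ [(i, !e)]) →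
    ¬ (W ++ [(i, !e)] <+: g.toWord) →
    W ++ [(i, e)] <+: (FreeGroup.mk W * FreeGroup.mk [(i, e)] * (FreeGroup.mk W)⁻¹ * g).toWord := by
  induction W with
  | nil =>
    intro g _ _ hg
    have h1 : (FreeGroup.mk ([] : List (α × Bool))) = 1 := rfl
    rw [h1, one_mul, inv_one, mul_one, aux_toWord_cons]
    · simp
    · cases hgw : g.toWord with
      | nil => exact FreeGroup.IsReduced.singleton
      | cons b L =>
        rw [FreeGroup.isReduced_cons_cons]
        constructor
        · rintro h
          by_contra h'
          apply hg
          rw [hgw]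
          obtain ⟨b1, b2⟩ := b
          simp only at h h'
          subst h
          have : b2 = !e := by cases b2 <;> cases e <;> simp_all
          subst this
          simp
        · rw [← hgw]; exact FreeGroup.isReduced_toWord
  | cons a W ih =>
    intro g h1 h2 hg
    have h1' : FreeGroup.IsReduced (W ++ [(i, e)]) := h1.infix ⟨[a], [], by simp⟩
    have h2' : FreeGroup.IsReduced (W ++ [(i, !e)]) := h2.infix ⟨[a], [], by simp⟩
    have hmk : FreeGroup.mk (a :: W) = FreeGroup.mk [a] * FreeGroup.mk W := by
      rw [FreeGroup.mul_mk]; rfl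
    have key := ih ((FreeGroup.mk [a])⁻¹ * g) h1' h2' (by
      intro hc
      apply hg
      have := aux_toWord_cons' a _ _ (by simp) (by simpa using h2) hc
      rw [mul_inv_cancel_left] at this
      rw [this]
      simpa using hc)
    have h3 := aux_toWord_cons' a _ _ (by simp) (by simpa using h1) key
    have h4 : FreeGroup.mk (a :: W) * FreeGroup.mk [(i, e)] * (FreeGroup.mk (a :: W))⁻¹ * g =
      FreeGroup.mk [a] * (FreeGroup.mk W * FreeGroup.mk [(i, e)] * (FreeGroup.mk W)⁻¹ *
        ((FreeGroup.mk [a])⁻¹ * g)) := by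
      rw [hmk]; group
    rw [h4, h3]
    simpa using key

lemma aux_reduced_snoc {α : Type*} [DecidableEq α] (i : α) (W : List (α × Bool))
    (hW : FreeGroup.IsReduced W) (h : ∀ b V, W ≠ V ++ [(i, b)]) (e : Bool) :
    FreeGroup.IsReduced (W ++ [(i, e)]) := by
  rcases List.eq_nil_or_concat W with rfl | ⟨V, b, rfl⟩
  · exact FreeGroup.IsReduced.singleton
  · have : FreeGroup.IsReduced ([b] ++ [(i, e)]) := by
      rw [List.singleton_append, FreeGroup.isReduced_cons_cons]
      refine ⟨fun hb => ?_, FreeGroup.IsReduced.singleton⟩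
      exfalso
      obtain ⟨b1, b2⟩ := b
      simp only at hb
      subst hb
      exact h b2 V (by simp)
    have h2 := FreeGroup.IsReduced.append_overlap (L₁ := V) (by simpa using hW) this (by simp)
    simpa using h2

/-- ping-pong conclusion -/
lemma aux_pingpong {n : ℕ} (W : Fin n → FG n)
    (hA : ∀ i b V, (W i).toWord ≠ V ++ [(i, b)])
    (hB : ∀ i j b, i ≠ j → ¬ ((W j).toWord ++ [(j, b)] <+: (W i).toWord))
    (L : List (Fin n × Bool)) (hL : FreeGroup.IsReduced L) :
    (L = [] → FreeGroup.lift (fun i => W i * of i * (W i)⁻¹) (FreeGroup.mk L) = 1) ∧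
    ∀ s L', L = s :: L' → (W s.1).toWord ++ [s] <+:
      (FreeGroup.lift (fun i => W i * of i * (W i)⁻¹) (FreeGroup.mk L)).toWord := by
  have hlen : ∀ i j b c, ((W i).toWord ++ [(i, b)]) <+: ((W j).toWord ++ [(j, c)]) →
      i = j ∧ b = c := by
    intro i j b c h
    rw [List.prefix_concat_iff] at h
    rcases h with h | h
    · have := List.append_inj_right' h (by simp)
      simpa using this
    · by_cases hij : j = i
      · subst hij
        have := h.length_le
        simp at this
      · exact absurd h (hB _ _ _ hij)
  induction L with
  | nil => exact ⟨fun _ => rfl, by simp⟩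
  | cons s L ih =>
    refine ⟨by simp, ?_⟩
    rintro s' L' ⟨⟩
    have hL' : FreeGroup.IsReduced L := hL.infix ⟨[s], [], by simp⟩
    obtain ⟨ih1, ih2⟩ := ih hL'
    obtain ⟨i, e⟩ := s
    set f := FreeGroup.lift (fun i => W i * of i * (W i)⁻¹) with hf
    have hmk : FreeGroup.mk ((i, e) :: L) = FreeGroup.mk [(i, e)] * FreeGroup.mk L := by
      rw [FreeGroup.mul_mk]; rfl
    have hs : f (FreeGroup.mk [(i, e)]) = FreeGroup.mk (W i).toWord * FreeGroup.mk [(i, e)] *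
        (FreeGroup.mk (W i).toWord)⁻¹ := by
      rw [FreeGroup.mk_toWord]
      cases e
      · have : FreeGroup.mk [(i, false)] = (of i)⁻¹ := rfl
        rw [this, _root_.map_inv, hf, FreeGroup.lift_apply_of]
        group
      · have : FreeGroup.mk [(i, true)] = of i := rfl
        rw [this, hf, FreeGroup.lift_apply_of]
    rw [hmk, _root_.map_mul, hs]
    apply aux_ping
    · exact aux_reduced_snoc _ _ FreeGroup.isReduced_toWord (hA i) _
    · exact aux_reduced_snoc _ _ FreeGroup.isReduced_toWord (hA i) _
    · intro hc
      cases L with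
      | nil =>
        rw [ih1 rfl] at hc
        simp at hc
      | cons t L =>
        have h5 := ih2 t L rfl
        obtain ⟨j, d⟩ := t
        rw [FreeGroup.isReduced_cons_cons] at hL
        have h6 := hL.1
        rcases List.prefix_or_prefix_of_prefix hc h5 with h7 | h7
        · obtain ⟨rfl, rfl⟩ := hlen _ _ _ _ h7
          simp at h6
        · obtain ⟨rfl, rfl⟩ := hlen _ _ _ _ h7
          simp at h6

lemma aux_triv {n : ℕ} (W : Fin n → FG n) (φ : MulAut (FG n))
    (hφ : ∀ i, φ (of i) = W i * of i * (W i)⁻¹)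
    (hA : ∀ i b V, (W i).toWord ≠ V ++ [(i, b)])
    (hB : ∀ i j b, i ≠ j → ¬ ((W j).toWord ++ [(j, b)] <+: (W i).toWord)) : φ = 1 := by
  have hlift : ∀ x, φ x = FreeGroup.lift (fun i => W i * of i * (W i)⁻¹) x := by
    intro x
    have : (φ : FG n ≃* FG n).toMonoidHom = FreeGroup.lift (fun i => W i * of i * (W i)⁻¹) := by
      apply FreeGroup.ext_hom
      intro i
      rw [FreeGroup.lift_apply_of]
      exact hφ i
    exact DFunLike.congr_fun this x
  have hW : ∀ m, W m = 1 := by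
    intro m
    obtain ⟨y, hy⟩ := φ.surjective (of m)
    have hpp := aux_pingpong W hA hB y.toWord FreeGroup.isReduced_toWord
    rw [FreeGroup.mk_toWord, ← hlift, hy] at hpp
    cases hyw : y.toWord with
    | nil => exact absurd (hpp.1 hyw) (FreeGroup.of_ne_one m)
    | cons s L =>
      have h := hpp.2 s L hyw
      rw [FreeGroup.toWord_of] at h
      have hl := h.length_le
      simp only [List.length_append, List.length_singleton] at hl
      have h0 : (W s.1).toWord = [] := List.length_eq_zero_iff.mp (by omega)
      rw [h0] at h
      have : s = (m, true) := by simpa using h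
      rw [this] at h0
      exact FreeGroup.toWord_eq_nil_iff.mp h0
  refine MulEquiv.toMonoidHom_injective (FreeGroup.ext_hom _ _ fun i => ?_)
  show φ (of i) = of i
  rw [hφ, hW]; simp

lemma alphaAut_inv_apply_of (n : ℕ) {i j : Fin n} (hij : i ≠ j) (r : Fin n) :
    (alphaAut n i j)⁻¹ (of r) = if r = i then (of j)⁻¹ * of i * of j else of r := by
  simp only [alphaAut, dif_neg hij]
  show alphaInvHom n i j (of r) = _
  simp [alphaInvHom]

lemma aux_gen {n : ℕ} (N : ℕ) : ∀ (W : Fin n → FG n) (φ : MulAut (FG n)),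
    (∀ i, φ (of i) = W i * of i * (W i)⁻¹) → ∑ i, (W i).norm = N →
    φ ∈ Subgroup.closure {ψ | ∃ i j, i ≠ j ∧ ψ = alphaAut n i j} := by
  induction N using Nat.strong_induction_on with
  | _ N ih =>
  intro W φ hφ hN
  have hsum : ∀ (i : Fin n) (v : FG n), v.norm < (W i).norm →
      ∑ k, (Function.update W i v k).norm < N := by
    intro i v hv
    rw [← hN]
    apply Finset.sum_lt_sum
    · intro k _
      by_cases hk : k = i
      · subst hk; simp [hv.le]
      · simp [hk]
    · exact ⟨i, Finset.mem_univ _, by simpa using hv⟩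
  by_cases hA : ∀ i b V, (W i).toWord ≠ V ++ [(i, b)]
  · by_cases hB : ∀ i j b, i ≠ j → ¬ ((W j).toWord ++ [(j, b)] <+: (W i).toWord)
    · rw [aux_triv W φ hφ hA hB]; exact one_mem _
    · push Not at hB
      obtain ⟨i, j, b, hij, U, hU⟩ := hB
      have hWi : W i = W j * FreeGroup.mk [(j, b)] * FreeGroup.mk U := by
        conv_lhs => rw [← FreeGroup.mk_toWord (x := W i), ← hU, ← FreeGroup.mul_mk,
          ← FreeGroup.mul_mk, FreeGroup.mk_toWord]
      have hnorm : (W j * FreeGroup.mk U).norm < (W i).norm := by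
        have h1 := FreeGroup.norm_mul_le (W j) (FreeGroup.mk U)
        have h2 : (FreeGroup.mk U).norm ≤ U.length := FreeGroup.norm_mk_le
        have h3 : (W i).norm = (W j).norm + 1 + U.length := by
          simp only [FreeGroup.norm]; rw [← hU]; simp; omega
        omega
      have hmem : alphaAut n i j ∈ Subgroup.closure {ψ | ∃ i j, i ≠ j ∧ ψ = alphaAut n i j} :=
        Subgroup.subset_closure ⟨i, j, hij, rfl⟩
      cases b
      · have := ih _ (hsum i _ hnorm) (Function.update W i (W j * FreeGroup.mk U))
          (φ * alphaAut n i j) (by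
            intro k
            rw [MulAut.mul_apply, alphaAut_apply_of n hij]
            by_cases hk : k = i
            · subst hk
              have h1 : FreeGroup.mk [(j, false)] = (of j)⁻¹ := rfl
              rw [h1] at hWi
              simp only [if_true, _root_.map_mul, _root_.map_inv, hφ, Function.update_self]
              rw [hWi]; group
            · simp [hk, hφ]) rfl
        exact (Subgroup.mul_mem_cancel_right _ hmem).1 this
      · have := ih _ (hsum i _ hnorm) (Function.update W i (W j * FreeGroup.mk U))
          (φ * (alphaAut n i j)⁻¹) (by
            intro k
            rw [MulAut.mul_apply, alphaAut_inv_apply_of n hij]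
            by_cases hk : k = i
            · subst hk
              have h1 : FreeGroup.mk [(j, true)] = (of j) := rfl
              rw [h1] at hWi
              simp only [if_true, _root_.map_mul, _root_.map_inv, hφ, Function.update_self]
              rw [hWi]; group
            · simp [hk, hφ]) rfl
        exact (Subgroup.mul_mem_cancel_right _ (inv_mem hmem)).1 this
  · push Not at hA
    obtain ⟨i, b, V, hV⟩ := hA
    have hWi : W i = FreeGroup.mk V * FreeGroup.mk [(i, b)] := by
      conv_lhs => rw [← FreeGroup.mk_toWord (x := W i), hV, ← FreeGroup.mul_mk]
    have hnorm : (FreeGroup.mk V).norm < (W i).norm := by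
      have h2 : (FreeGroup.mk V).norm ≤ V.length := FreeGroup.norm_mk_le
      have h3 : (W i).norm = V.length + 1 := by
        simp only [FreeGroup.norm]; rw [hV]; simp
      omega
    refine ih _ (hsum i _ hnorm) (Function.update W i (FreeGroup.mk V)) φ ?_ rfl
    intro k
    by_cases hk : k = i
    · subst hk
      rw [hφ, Function.update_self, hWi]
      cases b
      · have h1 : FreeGroup.mk [(k, false)] = (of k)⁻¹ := rfl
        rw [h1]; group
      · have h1 : FreeGroup.mk [(k, true)] = (of k) := rfl
        rw [h1]; group
    · simp [hk, hφ]

lemma alphaP_closure (n : ℕ) :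
    Subgroup.closure {ψ : PSigmaAut n | ∃ i j, i ≠ j ∧ ψ = alphaP n i j} = ⊤ := by
  rw [eq_top_iff]
  intro φ _
  choose W hW using φ.2
  have h := aux_gen _ W φ.1 hW rfl
  have h2 : Subgroup.closure {ψ | ∃ i j, i ≠ j ∧ ψ = alphaAut n i j} =
      (Subgroup.closure {ψ : PSigmaAut n | ∃ i j, i ≠ j ∧ ψ = alphaP n i j}).map
        (PSigmaAut n).subtype := by
    rw [MonoidHom.map_closure]
    congr 1
    ext ψ
    constructor
    · rintro ⟨i, j, hij, rfl⟩
      exact ⟨alphaP n i j, ⟨i, j, hij, rfl⟩, rfl⟩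
    · rintro ⟨_, ⟨i, j, hij, rfl⟩, rfl⟩
      exact ⟨i, j, hij, rfl⟩
  rw [h2] at h
  obtain ⟨x, hx, hxe⟩ := h
  have : x = φ := Subtype.ext hxe
  rwa [← this]

end PartOne

section PartTwo

lemma alphaP_ext {n : ℕ} {φ ψ : PSigmaAut n}
    (h : ∀ r, (φ : MulAut (FG n)) (of r) = (ψ : MulAut (FG n)) (of r)) : φ = ψ := by
  apply Subtype.ext
  refine MulEquiv.toMonoidHom_injective (FreeGroup.ext_hom _ _ fun i => ?_)
  exact h i

lemma alphaP_apply {n : ℕ} {i j : Fin n} (hij : i ≠ j) (r : Fin n) :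
    (alphaP n i j : MulAut (FG n)) (of r) = if r = i then of j * of i * (of j)⁻¹ else of r :=
  alphaAut_apply_of n hij r

lemma alphaP_R1 {n : ℕ} {i j k l : Fin n} (hij : i ≠ j) (hkl : k ≠ l) (hik : i ≠ k) (hil : i ≠ l)
    (hjk : j ≠ k) : alphaP n i j * alphaP n k l = alphaP n k l * alphaP n i j := by
  apply alphaP_ext
  intro r
  simp only [Subgroup.coe_mul, MulAut.mul_apply, alphaP_apply hij, alphaP_apply hkl]
  by_cases h1 : r = i
  · subst h1
    simp [alphaP_apply hij, alphaP_apply hkl, hik, hjk]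
  · by_cases h2 : r = k
    · subst h2
      simp [alphaP_apply hij, alphaP_apply hkl, h1, hil.symm]
    · simp [alphaP_apply hij, alphaP_apply hkl, h1, h2]

lemma alphaP_R3 {n : ℕ} {i j k : Fin n} (hij : i ≠ j) (hik : i ≠ k) (hjk : j ≠ k) :
    alphaP n i j * alphaP n k j * alphaP n i k = alphaP n i k * (alphaP n i j * alphaP n k j) := by
  apply alphaP_ext
  intro r
  simp only [Subgroup.coe_mul, MulAut.mul_apply, alphaP_apply hij, alphaP_apply hik,
    alphaP_apply hjk.symm]
  by_cases h1 : r = i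
  · subst h1
    simp [alphaP_apply hij, alphaP_apply hik, alphaP_apply hjk.symm, hik, hik.symm, hij.symm,
      hjk, mul_assoc]
  · by_cases h2 : r = k
    · subst h2
      simp [alphaP_apply hij, alphaP_apply hik, alphaP_apply hjk.symm, h1, hij.symm]
    · simp [alphaP_apply hij, alphaP_apply hik, alphaP_apply hjk.symm, h1, h2]

def genP (m : ℕ) : Fin m ⊕ Fin m → PSigmaAut (m + 1)
  | Sum.inl i => alphaP (m + 1) i.castSucc (Fin.last m)
  | Sum.inr i => alphaP (m + 1) (Fin.last m) i.castSucc

lemma genP_mem1 (m : ℕ) {i : Fin (m + 1)} (hi : i ≠ Fin.last m) :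
    alphaP (m + 1) i (Fin.last m) ∈ Subgroup.closure (Set.range (genP m)) := by
  obtain ⟨j, rfl⟩ := Fin.exists_castSucc_eq.2 hi
  exact Subgroup.subset_closure ⟨Sum.inl j, rfl⟩

lemma genP_mem2 (m : ℕ) {i : Fin (m + 1)} (hi : i ≠ Fin.last m) :
    alphaP (m + 1) (Fin.last m) i ∈ Subgroup.closure (Set.range (genP m)) := by
  obtain ⟨j, rfl⟩ := Fin.exists_castSucc_eq.2 hi
  exact Subgroup.subset_closure ⟨Sum.inr j, rfl⟩

/-- both conjugates lie in `N` -/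
def ConjIn {G : Type*} [Group G] (N : Subgroup G) (g h : G) : Prop :=
  g * h * g⁻¹ ∈ N ∧ g⁻¹ * h * g ∈ N

lemma ConjIn.of_comm {G : Type*} [Group G] {N : Subgroup G} {g h : G} (hh : h ∈ N)
    (hc : g * h = h * g) : ConjIn N g h := by
  constructor
  · rw [hc]; simpa using hh
  · rw [mul_assoc, ← hc]; simpa using hh

lemma ConjIn.of_comm2 {G : Type*} [Group G] {N : Subgroup G} {g h a : G} (hh : h ∈ N) (ha : a ∈ N)
    (hga : g * a = a * g) (hc : (g * a) * h = h * (g * a)) : ConjIn N g h := by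
  constructor
  · have : g * h * g⁻¹ = a⁻¹ * h * a := by
      have h1 : a * (g * h) = h * a * g := by rw [← mul_assoc, ← hga, hc, hga, mul_assoc]
      rw [mul_inv_eq_iff_eq_mul, mul_assoc, mul_assoc, eq_inv_mul_iff_mul_eq, h1, mul_assoc]
    rw [this]
    exact mul_mem (mul_mem (inv_mem ha) hh) ha
  · have : g⁻¹ * h * g = a * h * a⁻¹ := by
      rw [eq_mul_inv_iff_mul_eq, mul_assoc, mul_assoc, inv_mul_eq_iff_eq_mul, ← hc, mul_assoc]
    rw [this]
    exact mul_mem (mul_mem ha hh) (inv_mem ha)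

lemma ConjIn.of_comm3 {G : Type*} [Group G] {N : Subgroup G} {g h b : G} (hh : h ∈ N) (hb : b ∈ N)
    (hgb : ConjIn N g b) (hc : (b * h) * g = g * (b * h)) : ConjIn N g h := by
  constructor
  · have : g * h * g⁻¹ = (g * b * g⁻¹)⁻¹ * (b * h) := by
      have : b * h = g * (b * h) * g⁻¹ := by rw [← hc]; group
      rw [this]; group
    rw [this]
    exact mul_mem (inv_mem hgb.1) (mul_mem hb hh)
  · have : g⁻¹ * h * g = (g⁻¹ * b * g)⁻¹ * (b * h) := by
      have : b * h = g⁻¹ * ((b * h) * g) := by rw [hc]; group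
      rw [this]; group
    rw [this]
    exact mul_mem (inv_mem hgb.2) (mul_mem hb hh)

lemma genP_conj (m : ℕ) {k j : Fin (m + 1)} (hkj : k ≠ j) (hk : k ≠ Fin.last m)
    (hj : j ≠ Fin.last m) (s : Fin m ⊕ Fin m) :
    ConjIn (Subgroup.closure (Set.range (genP m))) (alphaP (m + 1) k j) (genP m s) := by
  have hA : ∀ i j : Fin (m + 1), i ≠ j → i ≠ Fin.last m → j ≠ Fin.last m →
      ConjIn (Subgroup.closure (Set.range (genP m))) (alphaP (m + 1) i j)
        (alphaP (m + 1) i (Fin.last m)) := by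
    intro i j hij hi hj
    refine ConjIn.of_comm2 (genP_mem1 m hi) (genP_mem2 m hj) ?_ ?_
    · exact alphaP_R1 hij hj.symm hi hij hj
    · exact alphaP_R3 hij hi hj
  rcases s with i | i
  · have hi : i.castSucc ≠ Fin.last m := (Fin.castSucc_lt_last i).ne
    show ConjIn _ _ (alphaP (m + 1) i.castSucc (Fin.last m))
    generalize i.castSucc = i at hi
    by_cases h1 : k = i
    · subst h1
      exact hA _ _ hkj hk hj
    · by_cases h2 : j = i
      · subst h2
        refine ConjIn.of_comm3 (genP_mem1 m hi) (genP_mem1 m hk) (hA _ _ hkj hk hi) ?_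
        exact alphaP_R3 hk hkj hj.symm
      · exact ConjIn.of_comm (genP_mem1 m hi) (alphaP_R1 hkj hi h1 hk h2)
  · have hi : i.castSucc ≠ Fin.last m := (Fin.castSucc_lt_last i).ne
    show ConjIn _ _ (alphaP (m + 1) (Fin.last m) i.castSucc)
    generalize i.castSucc = i at hi
    by_cases h1 : k = i
    · subst h1
      refine ConjIn.of_comm2 (genP_mem2 m hi) (genP_mem2 m hj) ?_ ?_
      · exact alphaP_R1 hkj hj.symm hk hkj hj
      · have h := alphaP_R3 hj.symm hk.symm hkj.symm
        have h2 := alphaP_R1 hkj hj.symm hk hkj hj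
        rw [h2]; exact h
    · exact ConjIn.of_comm (genP_mem2 m hi) (alphaP_R1 hkj hi.symm hk h1 hj)

lemma mem_normalizer_of_ConjIn {G ι : Type*} [Group G] (gen : ι → G) (g : G)
    (h : ∀ s, ConjIn (Subgroup.closure (Set.range gen)) g (gen s)) :
    ∀ x ∈ Subgroup.closure (Set.range gen), g * x * g⁻¹ ∈ Subgroup.closure (Set.range gen) ∧
      g⁻¹ * x * g ∈ Subgroup.closure (Set.range gen) := by
  intro x hx
  induction hx using Subgroup.closure_induction with
  | mem x hx => obtain ⟨s, rfl⟩ := hx; exact h s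
  | one => simp
  | mul x y _ _ hx hy =>
    constructor
    · have : g * (x * y) * g⁻¹ = (g * x * g⁻¹) * (g * y * g⁻¹) := by group
      rw [this]; exact mul_mem hx.1 hy.1
    · have : g⁻¹ * (x * y) * g = (g⁻¹ * x * g) * (g⁻¹ * y * g) := by group
      rw [this]; exact mul_mem hx.2 hy.2
  | inv x _ hx =>
    constructor
    · have : g * x⁻¹ * g⁻¹ = (g * x * g⁻¹)⁻¹ := by group
      rw [this]; exact inv_mem hx.1
    · have : g⁻¹ * x⁻¹ * g = (g⁻¹ * x * g)⁻¹ := by group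
      rw [this]; exact inv_mem hx.2

lemma genP_normal (m : ℕ) : (Subgroup.closure (Set.range (genP m))).Normal := by
  set N := Subgroup.closure (Set.range (genP m)) with hN
  have key : ∀ g : PSigmaAut (m + 1), ∀ x ∈ N, g * x * g⁻¹ ∈ N ∧ g⁻¹ * x * g ∈ N := by
    intro g
    have hg : g ∈ Subgroup.closure {ψ : PSigmaAut (m + 1) | ∃ i j, i ≠ j ∧ ψ = alphaP (m + 1) i j} := by
      rw [alphaP_closure]; trivial
    induction hg using Subgroup.closure_induction with
    | mem g hg =>
      obtain ⟨i, j, hij, rfl⟩ := hg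
      by_cases hi : i = Fin.last m
      · subst hi
        have h := genP_mem2 m hij.symm
        exact fun x hx => ⟨mul_mem (mul_mem h hx) (inv_mem h), mul_mem (mul_mem (inv_mem h) hx) h⟩
      · by_cases hj : j = Fin.last m
        · subst hj
          have h := genP_mem1 m hij
          exact fun x hx => ⟨mul_mem (mul_mem h hx) (inv_mem h), mul_mem (mul_mem (inv_mem h) hx) h⟩
        · exact mem_normalizer_of_ConjIn _ _ (genP_conj m hij hi hj)
    | one => intro x hx; simpa using hx
    | mul a b _ _ ha hb =>
      intro x hx
      constructor
      · have : a * b * x * (a * b)⁻¹ = a * (b * x * b⁻¹) * a⁻¹ := by group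
        rw [this]; exact (ha _ (hb x hx).1).1
      · have : (a * b)⁻¹ * x * (a * b) = b⁻¹ * (a⁻¹ * x * a) * b := by group
        rw [this]; exact (hb _ (ha x hx).2).2
    | inv a _ ha =>
      intro x hx
      rw [inv_inv]
      exact (ha x hx).symm
  exact ⟨fun x hx g => (key g x hx).1⟩

def retr (n : ℕ) : FG n →* FG n := (castHom n).comp (projHom n)

lemma retr_castSucc (m : ℕ) (i : Fin m) : retr (m + 1) (of i.castSucc) = of i.castSucc := by
  simp only [retr, MonoidHom.comp_apply, projHom, castHom, FreeGroup.lift_apply_of]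
  rw [dif_pos (show ((i.castSucc : Fin (m + 1)) : ℕ) < m + 1 - 1 from i.isLt)]
  rw [FreeGroup.lift_apply_of]
  rfl

lemma retr_last (m : ℕ) : retr (m + 1) (of (Fin.last m)) = 1 := by
  simp [retr, projHom]

/-- automorphisms commuting with the retraction and fixing the last generator -/
def stabP (m : ℕ) : Subgroup (PSigmaAut (m + 1)) where
  carrier := {s | (∀ x, (s : MulAut (FG (m + 1))) (retr (m + 1) x) =
      retr (m + 1) ((s : MulAut (FG (m + 1))) x)) ∧
      (s : MulAut (FG (m + 1))) (of (Fin.last m)) = of (Fin.last m)}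
  one_mem' := by simp
  mul_mem' := by
    rintro a b ⟨ha, ha'⟩ ⟨hb, hb'⟩
    refine ⟨fun x => ?_, ?_⟩
    · simp only [Subgroup.coe_mul, MulAut.mul_apply]; rw [hb, ha]
    · simp only [Subgroup.coe_mul, MulAut.mul_apply]; rw [hb', ha']
  inv_mem' := by
    rintro a ⟨ha, ha'⟩
    refine ⟨fun x => ?_, ?_⟩
    · apply (a : MulAut (FG (m + 1))).injective
      rw [ha]
      simp only [Subgroup.coe_inv, MulAut.apply_inv_self]
    · apply (a : MulAut (FG (m + 1))).injective
      rw [ha']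
      simp only [Subgroup.coe_inv, MulAut.apply_inv_self]

lemma alphaP_mem_stabP (m : ℕ) {i j : Fin (m + 1)} (hij : i ≠ j) (hi : i ≠ Fin.last m)
    (hj : j ≠ Fin.last m) : alphaP (m + 1) i j ∈ stabP m := by
  refine ⟨fun x => ?_, by simp [alphaP_apply hij, hi.symm]⟩
  have hr : ∀ k : Fin (m + 1), k ≠ Fin.last m → retr (m + 1) (of k) = of k := by
    intro k hk
    obtain ⟨k, rfl⟩ := Fin.exists_castSucc_eq.2 hk
    exact retr_castSucc m k
  have : (((alphaP (m + 1) i j : MulAut (FG (m + 1))) : FG (m + 1) ≃* FG (m + 1)).toMonoidHom).comp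
      (retr (m + 1)) = (retr (m + 1)).comp
      (((alphaP (m + 1) i j : MulAut (FG (m + 1))) : FG (m + 1) ≃* FG (m + 1)).toMonoidHom) := by
    apply FreeGroup.ext_hom
    intro k
    simp only [MonoidHom.comp_apply, MulEquiv.coe_toMonoidHom]
    by_cases hk : k = Fin.last m
    · subst hk
      simp [retr_last, alphaP_apply hij, hi.symm]
    · rw [hr k hk, alphaP_apply hij]
      split_ifs
      · simp [hr i hi, hr j hj]
      · rw [hr k hk]
  exact DFunLike.congr_fun this x

lemma stabP_inf (m : ℕ) (s : PSigmaAut (m + 1)) (hs : s ∈ stabP m) (hk : s ∈ Kn (m + 1)) :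
    s = 1 := by
  apply alphaP_ext
  intro r
  induction r using Fin.lastCases with
  | last => rw [hs.2]; simp
  | cast i =>
    have h1 : piHom (m + 1) s = 1 := hk
    have h2 : desc (m + 1) s (of i) = of i := by
      have h3 : descAut (m + 1) s = 1 := congrArg Subtype.val h1
      have h4 : descAut (m + 1) s (of i) = of i := by rw [h3]; rfl
      exact h4
    have h5 : projHom (m + 1) ((s : MulAut (FG (m + 1))) (of i.castSucc)) = of i := by
      rw [← h2]
      simp only [desc, MonoidHom.comp_apply, castHom, FreeGroup.lift_apply_of]
      rfl
    have h6 := hs.1 (of i.castSucc)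
    rw [retr_castSucc] at h6
    rw [h6, retr, MonoidHom.comp_apply, h5, castHom]
    rw [FreeGroup.lift_apply_of]
    rfl

lemma genP_mem_Kn (m : ℕ) (s : Fin m ⊕ Fin m) : genP m s ∈ Kn (m + 1) := by
  show piHom (m + 1) (genP m s) = 1
  apply alphaP_ext
  intro r
  show projHom (m + 1) ((genP m s : MulAut (FG (m + 1))) (castHom (m + 1) (of r))) = of r
  have hc : castHom (m + 1) (of r) = of (Fin.castSucc (n := m) r) := by
    rw [castHom, FreeGroup.lift_apply_of]; rfl
  have hpr : ∀ r : Fin m, projHom (m + 1) (of r.castSucc) = of r := by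
    intro r
    rw [projHom, FreeGroup.lift_apply_of,
      dif_pos (show ((r.castSucc : Fin (m + 1)) : ℕ) < m + 1 - 1 from r.isLt)]
    rfl
  have hpl : projHom (m + 1) (of (Fin.last m)) = 1 := by simp [projHom]
  rw [hc]
  rcases s with i | i
  · show projHom (m + 1) ((alphaP (m + 1) i.castSucc (Fin.last m) : MulAut (FG (m + 1))) _) = _
    rw [alphaP_apply (Fin.castSucc_lt_last i).ne]
    split_ifs with h
    · rw [← h, _root_.map_mul, _root_.map_mul, _root_.map_inv, hpl, hpr]; simp
    · exact hpr r
  · show projHom (m + 1) ((alphaP (m + 1) (Fin.last m) i.castSucc : MulAut (FG (m + 1))) _) = _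
    rw [alphaP_apply (Fin.castSucc_lt_last i).ne', if_neg (Fin.castSucc_lt_last _).ne]
    exact hpr r

lemma Kn_eq (m : ℕ) : Kn (m + 1) = Subgroup.closure (Set.range (genP m)) := by
  have := genP_normal m
  have hle : Subgroup.closure (Set.range (genP m)) ≤ Kn (m + 1) := by
    rw [Subgroup.closure_le]
    rintro _ ⟨s, rfl⟩
    exact genP_mem_Kn m s
  apply le_antisymm _ hle
  intro x hx
  have htop : Subgroup.closure (Set.range (genP m)) ⊔ stabP m = ⊤ := by
    rw [eq_top_iff, ← alphaP_closure, Subgroup.closure_le]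
    rintro _ ⟨i, j, hij, rfl⟩
    by_cases hi : i = Fin.last m
    · subst hi
      exact Subgroup.mem_sup_left (genP_mem2 m hij.symm)
    · by_cases hj : j = Fin.last m
      · subst hj
        exact Subgroup.mem_sup_left (genP_mem1 m hij)
      · exact Subgroup.mem_sup_right (alphaP_mem_stabP m hij hi hj)
  have hx2 : x ∈ Subgroup.closure (Set.range (genP m)) ⊔ stabP m := by rw [htop]; trivial
  rw [Subgroup.mem_sup_of_normal_left] at hx2
  obtain ⟨a, ha, s, hs, rfl⟩ := hx2
  have hsK : s ∈ Kn (m + 1) := (Subgroup.mul_mem_cancel_left _ (hle ha)).1 hx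
  rw [stabP_inf m s hs hsK, mul_one]
  exact ha

end PartTwo

section PartThree

/-- exponent sum of the generator `j` -/
def expo {n : ℕ} (j : Fin n) : FG n →* Multiplicative ℤ :=
  FreeGroup.lift fun r => if r = j then Multiplicative.ofAdd 1 else 1

def shearA : Equiv.Perm (ℤ × ℤ) where
  toFun p := (p.1 + p.2, p.2)
  invFun p := (p.1 - p.2, p.2)
  left_inv p := by simp
  right_inv p := by simp

def shiftB : Equiv.Perm (ℤ × ℤ) where
  toFun p := (p.1, p.2 + 1)
  invFun p := (p.1, p.2 - 1)
  left_inv p := by simp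
  right_inv p := by simp

def heis {n : ℕ} (i j : Fin n) : FG n →* Equiv.Perm (ℤ × ℤ) :=
  FreeGroup.lift fun r => if r = i then shearA else if r = j then shiftB else 1

lemma heis_snd {n : ℕ} {i j : Fin n} (hij : i ≠ j) (u : FG n) :
    ∀ p, (heis i j u p).2 = p.2 + (expo j u).toAdd := by
  have hof : ∀ r p, (heis i j (of r) p).2 = p.2 + (expo j (of r)).toAdd := by
    intro r p
    simp only [heis, expo, FreeGroup.lift_apply_of]
    by_cases h1 : r = i
    · subst h1; simp [hij, shearA]
    · by_cases h2 : r = j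
      · subst h2; simp [hij.symm, shiftB]
      · simp [h1, h2]
  induction u using FreeGroup.induction_on with
  | C1 => simp
  | of r => exact hof r
  | inv_of r _ =>
    intro p
    have := hof r ((heis i j (of r))⁻¹ p)
    rw [← Equiv.Perm.mul_apply, mul_inv_cancel, Equiv.Perm.one_apply] at this
    rw [_root_.map_inv, _root_.map_inv, this, toAdd_inv]
    ring
  | mul x y hx hy =>
    intro p
    rw [_root_.map_mul, _root_.map_mul, Equiv.Perm.mul_apply, hx, hy, toAdd_mul]
    ring

lemma expo_comm {n : ℕ} {i j : Fin n} (hij : i ≠ j) (u : FG n) (hu : u * of i = of i * u) :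
    expo j u = 1 := by
  have h := congrArg (fun f : Equiv.Perm (ℤ × ℤ) => (f (0, 0)).1) (congrArg (heis i j) hu)
  have hA : heis i j (of i) = shearA := by simp [heis]
  simp only [_root_.map_mul, hA, Equiv.Perm.mul_apply] at h
  have h0 : shearA (0, 0) = (0, 0) := by simp [shearA]
  have h1 : ∀ p, (shearA p).1 = p.1 + p.2 := fun p => rfl
  rw [h0, h1, heis_snd hij] at h
  have : (expo j u).toAdd = 0 := by simpa using h
  exact this

lemma expo_congr {n : ℕ} {i j : Fin n} (hij : i ≠ j) (u v : FG n)
    (h : u * of i * u⁻¹ = v * of i * v⁻¹) : expo j u = expo j v := by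
  have := expo_comm hij (v⁻¹ * u) (by
    have h2 : u * of i = v * of i * v⁻¹ * u := by rw [← h]; group
    rw [mul_assoc, h2]; group)
  rw [_root_.map_mul, _root_.map_inv, inv_mul_eq_one] at this
  exact this.symm

lemma expo_apply {n : ℕ} (j : Fin n) (φ : PSigmaAut n) (u : FG n) :
    expo j ((φ : MulAut (FG n)) u) = expo j u := by
  have : (expo j).comp ((φ : MulAut (FG n)) : FG n ≃* FG n).toMonoidHom = expo j := by
    apply FreeGroup.ext_hom
    intro i
    obtain ⟨w, hw⟩ := φ.2 i
    simp only [MonoidHom.comp_apply, MulEquiv.coe_toMonoidHom, hw, _root_.map_mul, _root_.map_inv]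
    rw [mul_right_comm]; simp
  exact DFunLike.congr_fun this u

noncomputable def E {n : ℕ} {i j : Fin n} (hij : i ≠ j) : PSigmaAut n →* Multiplicative ℤ :=
  MonoidHom.mk' (fun φ => expo j (Classical.choose (φ.2 i))) (by
    intro φ ψ
    have h1 := Classical.choose_spec ((φ * ψ).2 i)
    have h2 := Classical.choose_spec (φ.2 i)
    have h3 := Classical.choose_spec (ψ.2 i)
    set w := Classical.choose ((φ * ψ).2 i)
    set v := Classical.choose (φ.2 i)
    set u := Classical.choose (ψ.2 i)
    have : expo j w = expo j ((φ : MulAut (FG n)) u * v) := by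
      apply expo_congr hij
      rw [← h1]
      simp only [Subgroup.coe_mul, MulAut.mul_apply, h3, _root_.map_mul, _root_.map_inv, h2]
      group
    rw [this, _root_.map_mul, expo_apply, mul_comm])

lemma E_eq {n : ℕ} {i j : Fin n} (hij : i ≠ j) (φ : PSigmaAut n) (w : FG n)
    (hw : (φ : MulAut (FG n)) (of i) = w * of i * w⁻¹) : E hij φ = expo j w := by
  apply expo_congr hij
  rw [← hw]
  exact (Classical.choose_spec (φ.2 i)).symm

lemma E_alpha {n : ℕ} {i j k l : Fin n} (hij : i ≠ j) (hkl : k ≠ l) :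
    E hij (alphaP n k l) = if i = k ∧ j = l then Multiplicative.ofAdd 1 else 1 := by
  by_cases h : i = k
  · subst h
    rw [E_eq hij _ (of l) (by rw [alphaP_apply hkl]; simp)]
    simp [expo, eq_comm]
  · rw [E_eq hij _ 1 (by rw [alphaP_apply hkl]; simp [h])]
    simp [h]

lemma general_ab {G ι : Type*} [Group G] [Fintype ι] [DecidableEq ι] (gen : ι → G)
    (hgen : Subgroup.closure (Set.range gen) = ⊤) (Ψ : ι → G →* Multiplicative ℤ)
    (hΨ : ∀ s t, Ψ s (gen t) = if s = t then Multiplicative.ofAdd 1 else 1) :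
    Nonempty (Additive (Abelianization G) ≃+ (ι → ℤ)) := by
  let f : Additive (Abelianization G) →+ (ι → ℤ) :=
    AddMonoidHom.pi fun s => MonoidHom.toAdditiveLeft (Abelianization.lift (Ψ s))
  let a : ι → Additive (Abelianization G) := fun s => Additive.ofMul (Abelianization.of (gen s))
  let g : (ι → ℤ) →+ Additive (Abelianization G) :=
    { toFun := fun v => ∑ s, v s • a s
      map_zero' := by simp
      map_add' := by intro v w; simp [add_smul, Finset.sum_add_distrib] }
  have hfa : ∀ s t, f (a t) s = if s = t then 1 else 0 := by
    intro s t
    show (Abelianization.lift (Ψ s) (Abelianization.of (gen t))).toAdd = _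
    rw [Abelianization.lift_apply_of, hΨ]
    split_ifs <;> rfl
  have hfg : ∀ v, f (g v) = v := by
    intro v
    show f (∑ s, v s • a s) = v
    ext t
    rw [map_sum, Finset.sum_apply]
    simp [hfa]
  have hsurj : Function.Surjective g := by
    have hx : ∀ x : G, Additive.ofMul (Abelianization.of x) ∈ g.range := by
      intro x
      have hx : x ∈ Subgroup.closure (Set.range gen) := by rw [hgen]; trivial
      induction hx using Subgroup.closure_induction with
      | mem x hx =>
        obtain ⟨s, rfl⟩ := hx
        refine ⟨Pi.single s 1, ?_⟩
        show ∑ t, (Pi.single s (1 : ℤ) : ι → ℤ) t • a t = a s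
        simp [Pi.single_apply]
      | one => simpa using zero_mem _
      | mul x y _ _ hx hy => rw [_root_.map_mul, ofMul_mul]; exact add_mem hx hy
      | inv x _ hx => rw [_root_.map_inv, ofMul_inv]; exact neg_mem hx
    intro y
    obtain ⟨x, hxy⟩ := QuotientGroup.mk_surjective (Additive.toMul y)
    have := hx x
    have hxy2 : Abelianization.of x = Additive.toMul y := hxy
    rw [hxy2] at this
    exact this
  exact ⟨(AddEquiv.ofBijective g ⟨Function.LeftInverse.injective hfg, hsurj⟩).symm⟩

end PartThree

lemma main_aux (m : ℕ) :
    Nonempty (Additive (Abelianization ↥(Kn (m + 1))) ≃+ (Fin m ⊕ Fin m → ℤ)) := by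
  let gen : Fin m ⊕ Fin m → Kn (m + 1) := fun s => ⟨genP m s, genP_mem_Kn m s⟩
  let Ψ : Fin m ⊕ Fin m → Kn (m + 1) →* Multiplicative ℤ := fun s =>
    (match s with
      | Sum.inl i => E (Fin.castSucc_lt_last i).ne
      | Sum.inr i => E (Fin.castSucc_lt_last i).ne').comp (Kn (m + 1)).subtype
  apply general_ab gen _ Ψ
  · rintro (i | i) (j | j)
    · show E (Fin.castSucc_lt_last i).ne (alphaP (m + 1) j.castSucc (Fin.last m)) = _
      rw [E_alpha _ (Fin.castSucc_lt_last j).ne]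
      simp
    · show E (Fin.castSucc_lt_last i).ne (alphaP (m + 1) (Fin.last m) j.castSucc) = _
      rw [E_alpha _ (Fin.castSucc_lt_last j).ne']
      simp [(Fin.castSucc_lt_last i).ne]
    · show E (Fin.castSucc_lt_last i).ne' (alphaP (m + 1) j.castSucc (Fin.last m)) = _
      rw [E_alpha _ (Fin.castSucc_lt_last j).ne]
      simp [(Fin.castSucc_lt_last i).ne]
    · show E (Fin.castSucc_lt_last i).ne' (alphaP (m + 1) (Fin.last m) j.castSucc) = _
      rw [E_alpha _ (Fin.castSucc_lt_last j).ne']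
      simp
  · rw [eq_top_iff]
    intro x _
    have h : (Subgroup.closure (Set.range gen)).map (Kn (m + 1)).subtype =
        Subgroup.closure (Set.range (genP m)) := by
      rw [MonoidHom.map_closure, ← Set.range_comp]
      rfl
    have hx : (x : PSigmaAut (m + 1)) ∈ (Subgroup.closure (Set.range gen)).map
        (Kn (m + 1)).subtype := by
      rw [h, ← Kn_eq]; exact x.2
    obtain ⟨y, hy, hyx⟩ := hx
    have : y = x := Subtype.ext hyx
    rwa [← this]

/-- STATEMENT 4: For every `n ≥ 2`, `H_1(K_n; ℤ) ≃ ℤ^{2n-2}`; equivalently, the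
abelianization of `K_n` is a free abelian group of rank `2n - 2`. -/
theorem statement4 (n : ℕ) (hn : 2 ≤ n) :
    Nonempty (Additive (Abelianization ↥(Kn n)) ≃+ (Fin (2 * n - 2) → ℤ)) := by
  obtain ⟨m, rfl⟩ : ∃ m, n = m + 1 := ⟨n - 1, by omega⟩
  obtain ⟨e⟩ := main_aux m
  have c : Fin (2 * (m + 1) - 2) ≃ Fin m ⊕ Fin m :=
    Fintype.equivOfCardEq (by simp; omega)
  exact ⟨e.trans (LinearEquiv.funCongrLeft ℤ ℤ c).toAddEquiv⟩
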